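/- Let d ≥ 1 and K, δ > 0. There exist constants c ∈ (0,1) and C > 0, depending only on d, K and δ, with the following property: for every x_0 ∈ ℝ^d, every 0 < t ≤ 1, every twice continuously differentiable function u on B(x_0, 2t) with |u(x)| + |∇u(x)| + |∇²u(x)| ≤ K for all x ∈ B(x_0, 2t), and every ε with 0 < ε < c t, the set E = {x ∈ B(x_0, t) : |u(x)| ≤ ε and |∇u(x)| ≥ δ} can be covered by at most C (t/ε)^{d−1} balls of radius ε with centers in B(x_0, t). -/

import Mathlib

open MeasureTheory Metric Set
open scoped ENNReal NNReal

noncomputable section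

/-- The bilinear form `⟨A ξ, η⟩ = ∑ i j, A i j * ξ j * η i`. -/
def bform {d : ℕ} (A : Matrix (Fin d) (Fin d) ℝ) (ξ η : EuclideanSpace ℝ (Fin d)) : ℝ :=
  ∑ i, ∑ j, A i j * ξ j * η i

/-- The point of `ℝᵈ` (as `EuclideanSpace`) with integer coordinates `z`. -/
def perPt {d : ℕ} (z : Fin d → ℤ) : EuclideanSpace ℝ (Fin d) :=
  (WithLp.equiv 2 (Fin d → ℝ)).symm fun i => (z i : ℝ)

/-- The class `𝒜(λ, M)`: symmetric, elliptic, `ℤᵈ`-periodic, `M`-Lipschitz coefficients. -/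
structure MemA (d : ℕ) (lam M : ℝ)
    (A : EuclideanSpace ℝ (Fin d) → Matrix (Fin d) (Fin d) ℝ) : Prop where
  symm : ∀ y, (A y).IsSymm
  ellip_low : ∀ y ξ, lam * ‖ξ‖ ^ 2 ≤ bform (A y) ξ ξ
  ellip_high : ∀ y ξ, bform (A y) ξ ξ ≤ ‖ξ‖ ^ 2
  periodic : ∀ (y : EuclideanSpace ℝ (Fin d)) (z : Fin d → ℤ), A (y + perPt z) = A y
  lipschitz : ∀ x y i j, |A x i j - A y i j| ≤ M * ‖x - y‖

/-- `u` is a weak solution of `div (A ∇u) = 0` in the open set `Ω`: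
`u` is `C¹` on `Ω` and the weak formulation holds against all test functions. -/
def IsWeakSol {d : ℕ} (A : EuclideanSpace ℝ (Fin d) → Matrix (Fin d) (Fin d) ℝ)
    (Ω : Set (EuclideanSpace ℝ (Fin d))) (u : EuclideanSpace ℝ (Fin d) → ℝ) : Prop :=
  ContDiffOn ℝ 1 u Ω ∧
  ∀ ψ : EuclideanSpace ℝ (Fin d) → ℝ, ContDiff ℝ (⊤ : ℕ∞) ψ → HasCompactSupport ψ →
    tsupport ψ ⊆ Ω →
    ∫ x in Ω, bform (A x) (gradient u x) (gradient ψ x) = 0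

/-- The unit cube `[0,1]^d`. -/
def unitCube (d : ℕ) : Set (EuclideanSpace ℝ (Fin d)) := {y | ∀ i, y i ∈ Set.Icc (0 : ℝ) 1}

/-- `χ` is the corrector for the operator with coefficient matrix `A`. -/
def IsCorrector {d : ℕ} (A : EuclideanSpace ℝ (Fin d) → Matrix (Fin d) (Fin d) ℝ)
    (χ : Fin d → EuclideanSpace ℝ (Fin d) → ℝ) : Prop :=
  ∀ j, ContDiff ℝ 1 (χ j) ∧
    (∀ (y : EuclideanSpace ℝ (Fin d)) (z : Fin d → ℤ), χ j (y + perPt z) = χ j y) ∧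
    (∫ y in unitCube d, χ j y) = 0 ∧
    (∀ ψ : EuclideanSpace ℝ (Fin d) → ℝ, ContDiff ℝ (⊤ : ℕ∞) ψ → HasCompactSupport ψ →
      ∫ y, bform (A y) (gradient (χ j) y + EuclideanSpace.single j 1) (gradient ψ y) = 0)

/-- The homogenized matrix `Â`, `â_ij = ∫_{[0,1]^d} (a_ij + a_ik ∂χ_j/∂y_k) dy`. -/
def homMatrix {d : ℕ} (A : EuclideanSpace ℝ (Fin d) → Matrix (Fin d) (Fin d) ℝ)
    (χ : Fin d → EuclideanSpace ℝ (Fin d) → ℝ) : Matrix (Fin d) (Fin d) ℝ :=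
  Matrix.of fun i j => ∫ y in unitCube d, (A y i j + ∑ k, A y i k * gradient (χ j) y k)

/-- The ellipsoid `E_r = {x : ⟨Â⁻¹ x, x⟩ < r²}` associated with a homogenized matrix `Â`. -/
def ellipsoid {d : ℕ} (Ahat : Matrix (Fin d) (Fin d) ℝ) (r : ℝ) :
    Set (EuclideanSpace ℝ (Fin d)) := {x | bform Ahat⁻¹ x x < r ^ 2}

/-- The class `ℱ(N)` of normalized solutions of constant-coefficient equations in `B₁`
satisfying an `N`-doubling condition. -/
def MemF (d : ℕ) (lam N : ℝ) (u : EuclideanSpace ℝ (Fin d) → ℝ) : Prop :=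
  (∃ A : Matrix (Fin d) (Fin d) ℝ, A.IsSymm ∧
      (∀ ξ : EuclideanSpace ℝ (Fin d), lam * ‖ξ‖ ^ 2 ≤ bform A ξ ξ ∧ bform A ξ ξ ≤ ‖ξ‖ ^ 2) ∧
      IsWeakSol (fun _ => A) (ball 0 1) u) ∧
  (⨍ x in ball (0 : EuclideanSpace ℝ (Fin d)) 1, (u x) ^ 2) = 1 ∧
  (⨍ x in ball (0 : EuclideanSpace ℝ (Fin d)) 1, (u x) ^ 2) ≤
    N * ⨍ x in ball (0 : EuclideanSpace ℝ (Fin d)) (1 / 2), (u x) ^ 2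

/-- `w` is harmonic on `Ω`: it is `C²` there and its Laplacian vanishes. -/
def IsHarmonicOn {d : ℕ} (w : EuclideanSpace ℝ (Fin d) → ℝ)
    (Ω : Set (EuclideanSpace ℝ (Fin d))) : Prop :=
  ContDiffOn ℝ 2 w Ω ∧ ∀ x ∈ Ω, (∑ i, gradient (fun y => gradient w y i) x i) = 0

/-- `F_ε(y, r) = ℋ^{d-1}(Z(u) ∩ B(y,r)) / r^{d-1}` where `Z(u)` is the nodal set of `u` in `B₂`. -/
def nodalRatio {d : ℕ} (u : EuclideanSpace ℝ (Fin d) → ℝ)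
    (y : EuclideanSpace ℝ (Fin d)) (r : ℝ) : ℝ≥0∞ :=
  μH[(d : ℝ) - 1] ({x ∈ ball (0 : EuclideanSpace ℝ (Fin d)) 2 | u x = 0} ∩ ball y r) /
    ENNReal.ofReal (r ^ (d - 1))

theorem pack_card {d : ℕ} (s : Finset (EuclideanSpace ℝ (Fin d))) (x₀ : EuclideanSpace ℝ (Fin d))
    (r R : ℝ) (hr : 0 < r) (hR : 0 ≤ R)
    (hs : ∀ c ∈ s, ‖c - x₀‖ ≤ R) (h : ∀ a ∈ s, ∀ b ∈ s, a ≠ b → r ≤ ‖a - b‖) :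
    (s.card : ℝ) ≤ ((2 * R + r) / r) ^ d := by
  let μ : Measure (EuclideanSpace ℝ (Fin d)) := volume
  let δ : ℝ := r / 2
  let ρ : ℝ := R + r / 2
  have δpos : 0 < δ := by simp only [δ]; positivity
  have ρpos : 0 < ρ := by simp only [ρ]; positivity
  set A := ⋃ c ∈ s, ball c δ with hA
  have D : Set.Pairwise (s : Set (EuclideanSpace ℝ (Fin d)))
      (Function.onFun Disjoint fun c => ball c δ) := by
    rintro c hc d hd hcd
    apply ball_disjoint_ball
    rw [dist_eq_norm]
    have := h c hc d hd hcd
    simp only [δ]; linarith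
  have A_subset : A ⊆ ball x₀ ρ := by
    refine iUnion₂_subset fun x hx => ?_
    apply ball_subset_ball'
    have := hs x hx
    rw [dist_eq_norm]; simp only [δ, ρ]; linarith
  have I : (s.card : ℝ≥0∞) * ENNReal.ofReal (δ ^ d) * μ (ball 0 1) ≤
      ENNReal.ofReal (ρ ^ d) * μ (ball 0 1) :=
    calc
      _ = μ A := by
        rw [hA, measure_biUnion_finset D fun c _ => measurableSet_ball]
        simp only [μ.addHaar_ball_of_pos _ δpos, finrank_euclideanSpace_fin]
        simp only [Finset.sum_const, nsmul_eq_mul, mul_assoc]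
      _ ≤ μ (ball x₀ ρ) := measure_mono A_subset
      _ = _ := by
        simp only [μ.addHaar_ball_of_pos _ ρpos, finrank_euclideanSpace_fin]
  have J : (s.card : ℝ≥0∞) * ENNReal.ofReal (δ ^ d) ≤ ENNReal.ofReal (ρ ^ d) :=
    (ENNReal.mul_le_mul_iff_left (measure_ball_pos _ _ zero_lt_one).ne' measure_ball_lt_top.ne).1 I
  have K := ENNReal.toReal_le_of_le_ofReal (pow_nonneg ρpos.le _) J
  rw [ENNReal.toReal_mul, ENNReal.toReal_natCast, ENNReal.toReal_ofReal (by positivity)] at K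
  have e : (2 * R + r) / r = ρ / δ := by simp only [ρ, δ]; field_simp
  rw [e, div_pow, le_div_iff₀ (by positivity)]
  exact K

theorem stack_card {d : ℕ} (hd : 1 ≤ d) (S : Finset (EuclideanSpace ℝ (Fin d)))
    (x₀ e : EuclideanSpace ℝ (Fin d)) (he : ‖e‖ = 1) (t ε A M : ℝ) (hε : 0 < ε) (hεt : ε ≤ t)
    (hA : 0 ≤ A) (hM : 5 / 4 + A < 3 / 4 * M)
    (hS : ∀ x ∈ S, ‖x - x₀‖ ≤ t) (hsep : ∀ a ∈ S, ∀ b ∈ S, a ≠ b → ε ≤ ‖a - b‖)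
    (hcone : ∀ x ∈ S, ∀ y ∈ S, |inner ℝ e (x - y)| ≤ A * ε + ‖x - y‖ / 4) :
    (S.card : ℝ) ≤ M * 5 ^ d * (t / ε) ^ (d - 1) := by
  classical
  have hM0 : 0 < M := by linarith
  have ht : 0 < t := by linarith
  set m : ℕ := ⌊t / (M * ε)⌋₊ + 1 with hm
  have hm1 : t / (M * ε) ≤ m := by
    rw [hm]; push_cast; exact (Nat.lt_floor_add_one _).le
  let f : EuclideanSpace ℝ (Fin d) × ℕ → EuclideanSpace ℝ (Fin d) :=
    fun p => p.1 + ((p.2 : ℝ) * (M * ε)) • e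
  have key : ∀ p ∈ S ×ˢ Finset.range m, ∀ q ∈ S ×ˢ Finset.range m, p ≠ q → ε ≤ ‖f p - f q‖ := by
    rintro ⟨x, k⟩ hp ⟨y, l⟩ hq hne
    simp only [Finset.mem_product, Finset.mem_range] at hp hq
    by_cases hkl : k = l
    · subst hkl
      have : x ≠ y := fun h => hne (by rw [h])
      have := hsep x hp.1 y hq.1 this
      simpa [f] using this
    · by_contra! hlt
      set j : ℝ := (k : ℝ) - l with hj
      have hj1 : 1 ≤ |j| := by
        have h : (1 : ℤ) ≤ |(k : ℤ) - l| := Int.one_le_abs (by omega)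
        have : ((1 : ℤ) : ℝ) ≤ ((|(k : ℤ) - l| : ℤ) : ℝ) := by exact_mod_cast h
        simpa [hj] using this
      have hfe : f (x, k) - f (y, l) = (x - y) + (j * (M * ε)) • e := by
        simp only [f, hj, sub_mul, sub_smul]; abel
      rw [hfe] at hlt
      set w := x - y with hw
      set a := |j| * (M * ε) with ha
      have hMe : 0 < M * ε := by positivity
      have haM : M * ε ≤ a := by rw [ha]; nlinarith
      have hnorm : ‖(j * (M * ε)) • e‖ = a := by
        rw [norm_smul, he, mul_one, Real.norm_eq_abs, abs_mul, abs_of_pos hMe]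
      have h1 : ‖w‖ ≤ ε + a := by
        have := norm_sub_le (w + (j * (M * ε)) • e) ((j * (M * ε)) • e)
        rw [add_sub_cancel_right, hnorm] at this
        linarith
      have h2 : |inner ℝ e (w + (j * (M * ε)) • e)| ≤ ε := by
        have := abs_real_inner_le_norm e (w + (j * (M * ε)) • e)
        rw [he, one_mul] at this; linarith
      have h3 : inner ℝ e (w + (j * (M * ε)) • e) = inner ℝ e w + j * (M * ε) := by
        rw [inner_add_right, inner_smul_right, real_inner_self_eq_norm_sq, he]; ring
      rw [h3] at h2
      have h4 : a ≤ ε + |inner ℝ e w| := by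
        have h5 := abs_sub (inner ℝ e w + j * (M * ε)) (inner ℝ e w)
        rw [add_sub_cancel_left, abs_mul, abs_of_pos hMe] at h5
        linarith
      have h5 := hcone x hp.1 y hq.1
      rw [← hw] at h5
      nlinarith
  have hinj : Set.InjOn f (S ×ˢ Finset.range m : Finset _) := by
    intro p hp q hq h
    by_contra hne
    have := key p hp q hq hne
    rw [h, sub_self, norm_zero] at this
    linarith
  have hcard : ((S ×ˢ Finset.range m).image f).card = S.card * m := by
    rw [Finset.card_image_of_injOn hinj, Finset.card_product, Finset.card_range]
  have hp := pack_card ((S ×ˢ Finset.range m).image f) x₀ ε (2 * t) hε (by positivity) ?_ ?_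
  · rw [hcard] at hp
    push_cast at hp
    have hte : 1 ≤ t / ε := by rw [le_div_iff₀ hε]; linarith
    have h6 : (2 * (2 * t) + ε) / ε ≤ 5 * (t / ε) := by
      rw [← mul_div_assoc]; gcongr; linarith
    have h7 : (S.card : ℝ) * (t / (M * ε)) ≤ (5 * (t / ε)) ^ d :=
      calc _ ≤ (S.card : ℝ) * m := by gcongr
        _ ≤ _ := hp
        _ ≤ _ := by gcongr
    obtain ⟨n, rfl⟩ : ∃ n, d = n + 1 := ⟨d - 1, by omega⟩
    rw [mul_pow, pow_succ (t / ε)] at h7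
    have h8 : t / (M * ε) = t / ε / M := by field_simp
    rw [h8] at h7
    simp only [Nat.add_sub_cancel]
    have h9 : (S.card : ℝ) * (t / ε) ≤ M * 5 ^ (n + 1) * (t / ε) ^ n * (t / ε) := by
      have : (S.card : ℝ) * (t / ε) = M * ((S.card : ℝ) * (t / ε / M)) := by field_simp
      rw [this]
      calc _ ≤ M * (5 ^ (n + 1) * ((t / ε) ^ n * (t / ε))) := by gcongr
        _ = _ := by ring
    exact le_of_mul_le_mul_right h9 (by linarith)
  · intro c hc
    obtain ⟨⟨x, k⟩, hp, rfl⟩ := Finset.mem_image.1 hc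
    simp only [Finset.mem_product, Finset.mem_range] at hp
    have hk : (k : ℝ) * (M * ε) ≤ t := by
      have : k ≤ ⌊t / (M * ε)⌋₊ := by omega
      have h : (k : ℝ) ≤ t / (M * ε) := (Nat.le_floor_iff (by positivity)).1 this
      rwa [le_div_iff₀ (by positivity)] at h
    have : f (x, k) - x₀ = (x - x₀) + ((k : ℝ) * (M * ε)) • e := by
      simp only [f]; abel
    rw [this]
    have h1 := norm_add_le (x - x₀) (((k : ℝ) * (M * ε)) • e)
    rw [norm_smul, he, mul_one, Real.norm_of_nonneg (by positivity)] at h1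
    have := hS x hp.1
    linarith
  · intro a ha b hb hab
    obtain ⟨p, hp, rfl⟩ := Finset.mem_image.1 ha
    obtain ⟨q, hq, rfl⟩ := Finset.mem_image.1 hb
    exact key p hp q hq (fun h => hab (by rw [h]))

theorem max_sep {d : ℕ} (E : Set (EuclideanSpace ℝ (Fin d))) (ε B : ℝ) (hε : 0 < ε)
    (h : ∀ S : Finset (EuclideanSpace ℝ (Fin d)), (∀ x ∈ S, x ∈ E) →
      (∀ a ∈ S, ∀ b ∈ S, a ≠ b → ε ≤ ‖a - b‖) → (S.card : ℝ) ≤ B) :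
    ∃ (n : ℕ) (ctr : Fin n → EuclideanSpace ℝ (Fin d)), (n : ℝ) ≤ B ∧ (∀ i, ctr i ∈ E) ∧
      E ⊆ ⋃ i, ball (ctr i) ε := by
  classical
  let P : Set ℕ := {n | ∃ S : Finset (EuclideanSpace ℝ (Fin d)), (∀ x ∈ S, x ∈ E) ∧
      (∀ a ∈ S, ∀ b ∈ S, a ≠ b → ε ≤ ‖a - b‖) ∧ S.card = n}
  have hne : P.Nonempty := ⟨0, ∅, by simp, by simp, by simp⟩
  have hbdd : BddAbove P := by
    refine ⟨⌊B⌋₊, ?_⟩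
    rintro n ⟨S, h1, h2, rfl⟩
    exact Nat.le_floor (h S h1 h2)
  obtain ⟨S, h1, h2, h3⟩ := Nat.sSup_mem hne hbdd
  refine ⟨S.card, fun i => (S.equivFin.symm i : EuclideanSpace ℝ (Fin d)), h S h1 h2,
    fun i => h1 _ (S.equivFin.symm i).2, ?_⟩
  intro x hx
  have : ∃ y ∈ S, ‖x - y‖ < ε := by
    by_contra! hcon
    have hxS : x ∉ S := fun hxS => by
      have := hcon x hxS
      rw [sub_self, norm_zero] at this; linarith
    have : (insert x S).card ∈ P := by
      refine ⟨insert x S, ?_, ?_, rfl⟩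
      · intro y hy
        rcases Finset.mem_insert.1 hy with rfl | hy
        · exact hx
        · exact h1 y hy
      · intro a ha b hb hab
        rcases Finset.mem_insert.1 ha with rfl | ha' <;> rcases Finset.mem_insert.1 hb with rfl | hb'
        · exact absurd rfl hab
        · exact hcon b hb'
        · rw [norm_sub_rev]; exact hcon a ha'
        · exact h2 a ha' b hb' hab
    have := le_csSup hbdd this
    rw [Finset.card_insert_of_notMem hxS] at this
    omega
  obtain ⟨y, hy, hxy⟩ := this
  refine mem_iUnion.2 ⟨S.equivFin ⟨y, hy⟩, ?_⟩
  simpa [dist_eq_norm] using hxy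

theorem cone_bound {d : ℕ} {K δ t ε r : ℝ} (hK : 0 < K) (hδ : 0 < δ)
    (x₀ p : EuclideanSpace ℝ (Fin d)) (u : EuclideanSpace ℝ (Fin d) → ℝ)
    (hu : ContDiffOn ℝ 2 u (ball x₀ t))
    (hb : ∀ x ∈ ball x₀ t, ‖fderiv ℝ (gradient u) x‖ ≤ K)
    (hr : 2 * r * K ≤ δ / 4)
    (x y z : EuclideanSpace ℝ (Fin d))
    (hx : x ∈ ball x₀ t ∩ ball p r) (hy : y ∈ ball x₀ t ∩ ball p r)
    (hz : z ∈ ball x₀ t ∩ ball p r) (hux : |u x| ≤ ε) (huy : |u y| ≤ ε)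
    (hgz : δ ≤ ‖gradient u z‖) :
    |inner ℝ (‖gradient u z‖⁻¹ • gradient u z) (x - y)| ≤ 2 / δ * ε + ‖x - y‖ / 4 := by
  have hdu : ∀ w ∈ ball x₀ t, DifferentiableAt ℝ u w := fun w hw =>
    (hu.differentiableOn (by norm_num)).differentiableAt (isOpen_ball.mem_nhds hw)
  have hdg : ∀ w ∈ ball x₀ t, DifferentiableAt ℝ (gradient u) w := by
    intro w hw
    have h1 : ContDiffOn ℝ 1 (fderiv ℝ u) (ball x₀ t) :=
      hu.fderiv_of_isOpen isOpen_ball (by norm_num)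
    have h2 : DifferentiableAt ℝ (fderiv ℝ u) w :=
      (h1.differentiableOn (by norm_num)).differentiableAt (isOpen_ball.mem_nhds hw)
    exact (InnerProductSpace.toDual ℝ
      (EuclideanSpace ℝ (Fin d))).symm.toContinuousLinearEquiv.differentiableAt.comp w h2
  have hconv : Convex ℝ (ball x₀ t ∩ ball p r) := (convex_ball _ _).inter (convex_ball _ _)
  have hlip : ∀ w ∈ ball x₀ t ∩ ball p r, ‖fderiv ℝ u w - fderiv ℝ u z‖ ≤ δ / 4 := by
    intro w hw
    have h1 := (convex_ball x₀ t).norm_image_sub_le_of_norm_fderiv_le hdg hb hz.1 hw.1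
    rw [← toDual_gradient, ← toDual_gradient, ← map_sub, LinearIsometryEquiv.norm_map]
    have h2 : ‖w - z‖ ≤ 2 * r := by
      rw [← dist_eq_norm]
      have := dist_triangle_right w z p
      have := mem_ball.1 hw.2
      have := mem_ball.1 hz.2
      linarith
    nlinarith
  have h := hconv.norm_image_sub_le_of_norm_fderiv_le' (fun w hw => hdu w hw.1) hlip hy hx
  rw [← toDual_gradient, InnerProductSpace.toDual_apply_apply, Real.norm_eq_abs] at h
  set v := gradient u z
  have hv : 0 < ‖v‖ := by linarith
  have h3 : |inner ℝ v (x - y)| ≤ 2 * ε + δ / 4 * ‖x - y‖ := by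
    rw [abs_le] at *
    constructor <;> linarith [hux.1, hux.2, huy.1, huy.2, h.1, h.2]
  rw [real_inner_smul_left, abs_mul, abs_of_pos (inv_pos.2 hv), inv_mul_le_iff₀ hv]
  have hnn : 0 ≤ 2 / δ * ε + ‖x - y‖ / 4 := by
    have : 0 ≤ ε := (abs_nonneg _).trans hux
    positivity
  calc _ ≤ _ := h3
    _ = δ * (2 / δ * ε + ‖x - y‖ / 4) := by field_simp
    _ ≤ _ := by gcongr

/-- Covering lemma via the implicit function theorem: the set where `|u| ≤ ε` and
`|∇u| ≥ δ` in `B(x₀, t)` can be covered by `C (t/ε)^{d-1}` balls of radius `ε`. -/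
theorem implicit_function_covering
    (d : ℕ) (hd : 1 ≤ d) (K δ : ℝ) (hK : 0 < K) (hδ : 0 < δ) :
    ∃ c C : ℝ, 0 < c ∧ c < 1 ∧ 0 < C ∧
      ∀ (x₀ : EuclideanSpace ℝ (Fin d)) (t : ℝ), 0 < t → t ≤ 1 →
      ∀ u : EuclideanSpace ℝ (Fin d) → ℝ, ContDiffOn ℝ 2 u (ball x₀ (2 * t)) →
        (∀ x ∈ ball x₀ (2 * t),
          |u x| + ‖gradient u x‖ + ‖fderiv ℝ (gradient u) x‖ ≤ K) →
      ∀ ε : ℝ, 0 < ε → ε < c * t →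
        ∃ (n : ℕ) (ctr : Fin n → EuclideanSpace ℝ (Fin d)),
          (n : ℝ) ≤ C * (t / ε) ^ (d - 1) ∧
          (∀ i, ctr i ∈ ball x₀ t) ∧
          {x ∈ ball x₀ t | |u x| ≤ ε ∧ δ ≤ ‖gradient u x‖} ⊆ ⋃ i, ball (ctr i) ε := by
  classical
  set ρ : ℝ := δ / (8 * K) with hρ
  have hρ0 : 0 < ρ := by positivity
  obtain ⟨T, hTfin, hT⟩ := Metric.totallyBounded_iff.1
    (isCompact_closedBall (0 : EuclideanSpace ℝ (Fin d)) 1).totallyBounded ρ hρ0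
  lift T to Finset (EuclideanSpace ℝ (Fin d)) using hTfin
  set M : ℝ := 2 + 3 / δ with hM
  have hM0 : 0 < M := by positivity
  refine ⟨1 / 2, (T.card + 1) * (M * 5 ^ d), by norm_num, by norm_num, by positivity, ?_⟩
  intro x₀ t ht ht1 u hu hb ε hε hεt
  have hεt' : ε ≤ t := by linarith
  have main := max_sep {x ∈ ball x₀ t | |u x| ≤ ε ∧ δ ≤ ‖gradient u x‖} ε
    ((T.card + 1) * (M * 5 ^ d) * (t / ε) ^ (d - 1)) hε ?_
  · obtain ⟨n, ctr, h1, h2, h3⟩ := main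
    exact ⟨n, ctr, h1, fun i => (h2 i).1, h3⟩
  intro S hSE hsep
  have hcov : S ⊆ T.biUnion fun p => S.filter fun x => x ∈ ball (x₀ + t • p) (t * ρ) := by
    intro x hx
    have hxb := mem_ball.1 (hSE x hx).1
    rw [dist_eq_norm] at hxb
    have h1 : t⁻¹ • (x - x₀) ∈ closedBall (0 : EuclideanSpace ℝ (Fin d)) 1 := by
      rw [mem_closedBall_zero_iff, norm_smul, Real.norm_of_nonneg (by positivity),
        inv_mul_le_iff₀ ht]
      linarith
    obtain ⟨p, hp, hxp⟩ := mem_iUnion₂.1 (hT h1)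
    refine Finset.mem_biUnion.2 ⟨p, hp, Finset.mem_filter.2 ⟨hx, ?_⟩⟩
    rw [mem_ball, dist_eq_norm] at hxp ⊢
    have h2 : x - (x₀ + t • p) = t • (t⁻¹ • (x - x₀) - p) := by
      rw [smul_sub, smul_smul, mul_inv_cancel₀ ht.ne', one_smul]; abel
    rw [h2, norm_smul, Real.norm_of_nonneg ht.le]
    gcongr
  have hpiece : ∀ p ∈ T, ((S.filter fun x => x ∈ ball (x₀ + t • p) (t * ρ)).card : ℝ) ≤
      M * 5 ^ d * (t / ε) ^ (d - 1) := by
    intro p _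
    set S' := S.filter fun x => x ∈ ball (x₀ + t • p) (t * ρ) with hS'
    rcases S'.eq_empty_or_nonempty with h0 | ⟨z, hz⟩
    · rw [h0, Finset.card_empty, Nat.cast_zero]; positivity
    have hmem : ∀ x ∈ S', x ∈ S ∧ x ∈ ball (x₀ + t • p) (t * ρ) := fun x hx =>
      Finset.mem_filter.1 hx
    have hsub : ball x₀ t ⊆ ball x₀ (2 * t) := ball_subset_ball (by linarith)
    have hgz := (hSE z (hmem z hz).1).2.2
    have hv : 0 < ‖gradient u z‖ := by linarith
    refine stack_card hd S' x₀ (‖gradient u z‖⁻¹ • gradient u z) ?_ t ε (2 / δ) M hε hεt'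
      (by positivity) ?_ ?_ ?_ ?_
    · rw [norm_smul, norm_inv, norm_norm, inv_mul_cancel₀ hv.ne']
    · rw [hM]
      have h1 : 0 < 1 / δ := by positivity
      have h2 : 2 / δ = 2 * (1 / δ) := by ring
      have h3 : 3 / δ = 3 * (1 / δ) := by ring
      rw [h2, h3]; linarith
    · intro x hx
      have := mem_ball.1 (hSE x (hmem x hx).1).1
      rw [dist_eq_norm] at this; exact this.le
    · exact fun a ha b hb => hsep a (hmem a ha).1 b (hmem b hb).1
    · intro x hx y hy
      refine cone_bound (t := t) (r := t * ρ) hK hδ x₀ (x₀ + t • p) u (hu.mono hsub) ?_ ?_ x y z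
        ⟨(hSE x (hmem x hx).1).1, (hmem x hx).2⟩ ⟨(hSE y (hmem y hy).1).1, (hmem y hy).2⟩
        ⟨(hSE z (hmem z hz).1).1, (hmem z hz).2⟩
        (hSE x (hmem x hx).1).2.1 (hSE y (hmem y hy).1).2.1 hgz
      · intro w hw
        have := hb w (hsub hw)
        linarith [abs_nonneg (u w), norm_nonneg (gradient u w)]
      · have : 2 * (t * ρ) * K = t * (δ / 4) := by rw [hρ]; field_simp; norm_num
        rw [this]
        nlinarith
  have hc : (S.card : ℝ) ≤ ∑ p ∈ T,
      ((S.filter fun x => x ∈ ball (x₀ + t • p) (t * ρ)).card : ℝ) := by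
    exact_mod_cast (Finset.card_le_card hcov).trans Finset.card_biUnion_le
  calc (S.card : ℝ) ≤ _ := hc
    _ ≤ ∑ p ∈ T, M * 5 ^ d * (t / ε) ^ (d - 1) := Finset.sum_le_sum hpiece
    _ = T.card * (M * 5 ^ d * (t / ε) ^ (d - 1)) := by rw [Finset.sum_const, nsmul_eq_mul]
    _ ≤ (T.card + 1) * (M * 5 ^ d * (t / ε) ^ (d - 1)) := by gcongr; linarith
    _ = _ := by ring

end
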